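/- In any deliberation space with n agents, every sequence D₀, D₁, …, D_k of deliberative coalition structures in which each consecutive pair (D_i, D_{i+1}) is either a single-agent transition or a merge transition satisfies k ≤ n². In particular, any deliberation consisting of single-agent and merge transitions has at most n² transitions. -/

import Mathlib

/-!
The potential `Σ |C|²` over the coalitions `C` of a structure grows by at least `2` with every
transition: an agent who moves from a coalition of size `a` to one of size `b ≥ a` adds
`(a - 1)² + (b + 1)² - a² - b² = 2 (b - a) + 2`, and merging coalitions of sizes `a, b ≥ 1` adds
`2ab`. Since the sizes add up to `n`, the potential never exceeds `n²`, so `2k ≤ n²`.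
The sizes of `C₂ ∪ {v}` and `C₁ ∪ C₂` are obtained by comparing the total size of the coalitions,
which is `n` before and after the transition.
-/

/-!
Formalization of deliberative coalition formation (Elkind et al., "United for Change:
Deliberative Coalition Formation to Change the Status Quo").

Agents and proposals live in a metric space `M`; `V` is the finite set of agents,
`X ⊆ M` the set of proposals, `r ∈ X` the status quo.  A deliberative coalition
structure is a multiset of deliberative coalitions whose agent sets partition `V`
(empty coalitions are allowed).
-/

open scoped Classical
noncomputable section

variable {M : Type*}

/-- Agent `v` approves proposal `p` relative to status quo `r`
if `v` is strictly closer to `p` than to `r`. -/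
def Approves [MetricSpace M] (r v p : M) : Prop := dist v p < dist v r

/-- The set `C^p` of agents in `C` that approve proposal `p`. -/
def approvers [MetricSpace M] (r : M) (C : Finset M) (p : M) : Finset M :=
  C.filter fun v => Approves r v p

/-- `(C, p)` is a deliberative coalition: `C ⊆ V`, `p ∈ X`, and either `p = r` and no
agent of `C` approves any proposal in `X \ {r}`, or `p ≠ r` and every agent of `C`
approves `p`. -/
def IsCoalition [MetricSpace M] (V : Finset M) (X : Set M) (r : M)
    (C : Finset M) (p : M) : Prop :=
  C ⊆ V ∧ p ∈ X ∧
    ((p = r ∧ ∀ v ∈ C, ∀ x ∈ X, x ≠ r → ¬ Approves r v x) ∨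
     (p ≠ r ∧ ∀ v ∈ C, Approves r v p))

/-- `D` is a deliberative coalition structure: a (finite) multiset of deliberative
coalitions whose agent sets are pairwise disjoint with union `V` (equivalently, the
multiset sum of the agent sets is exactly `V`). Empty coalitions are allowed. -/
def IsStructure [MetricSpace M] (V : Finset M) (X : Set M) (r : M)
    (D : Multiset (Finset M × M)) : Prop :=
  (∀ c ∈ D, IsCoalition V X r c.1 c.2) ∧
    (D.map fun c => c.1.val).sum = V.val

/-- Single-agent transition: an agent `v` in a coalition `(C₁, p₁)` with
`|C₂| ≥ |C₁| ≥ 1` moves to the coalition `(C₂, p₂)`; both the old and the new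
collection of coalitions must be deliberative coalition structures. -/
def SingleAgentTransition [MetricSpace M] (V : Finset M) (X : Set M) (r : M)
    (D D' : Multiset (Finset M × M)) : Prop :=
  IsStructure V X r D ∧ IsStructure V X r D' ∧
  ∃ (C₁ C₂ : Finset M) (p₁ p₂ v : M) (D₀ : Multiset (Finset M × M)),
    v ∈ C₁ ∧ 1 ≤ C₁.card ∧ C₁.card ≤ C₂.card ∧
    D = (C₁, p₁) ::ₘ (C₂, p₂) ::ₘ D₀ ∧
    D' = (C₁.erase v, p₁) ::ₘ (insert v C₂, p₂) ::ₘ D₀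

/-- Merge transition: two nonempty coalitions `(C₁, p₁)` and `(C₂, p₂)` join forces
behind a (possibly new) proposal `p ∈ X`. -/
def MergeTransition [MetricSpace M] (V : Finset M) (X : Set M) (r : M)
    (D D' : Multiset (Finset M × M)) : Prop :=
  IsStructure V X r D ∧ IsStructure V X r D' ∧
  ∃ (C₁ C₂ : Finset M) (p₁ p₂ p : M) (D₀ : Multiset (Finset M × M)),
    C₁.Nonempty ∧ C₂.Nonempty ∧ p ∈ X ∧
    D = (C₁, p₁) ::ₘ (C₂, p₂) ::ₘ D₀ ∧
    D' = (C₁ ∪ C₂, p) ::ₘ D₀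

/-- The sum of the squared coalition sizes of `D`. -/
def potential (D : Multiset (Finset M × M)) : ℕ :=
  (D.map fun c => c.1.card ^ 2).sum

/-- The sum of the coalition sizes of `D`. -/
def totalSize (D : Multiset (Finset M × M)) : ℕ :=
  (D.map fun c => c.1.card).sum

lemma potential_cons (c : Finset M × M) (D : Multiset (Finset M × M)) :
    potential (c ::ₘ D) = c.1.card ^ 2 + potential D := by
  simp [potential]

lemma totalSize_cons (c : Finset M × M) (D : Multiset (Finset M × M)) :
    totalSize (c ::ₘ D) = c.1.card + totalSize D := by
  simp [totalSize]

lemma potential_le_totalSize_sq (D : Multiset (Finset M × M)) :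
    potential D ≤ totalSize D ^ 2 := by
  induction D using Multiset.induction_on with
  | empty => simp [potential]
  | cons c D ih =>
    rw [potential_cons, totalSize_cons]
    nlinarith [Nat.zero_le (c.1.card * totalSize D)]

lemma card_sum_agents (D : Multiset (Finset M × M)) :
    ((D.map fun c : Finset M × M => c.1.val).sum).card = totalSize D := by
  induction D using Multiset.induction_on with
  | empty => simp [totalSize]
  | cons c D ih =>
    rw [totalSize_cons, Multiset.map_cons, Multiset.sum_cons, Multiset.card_add, ih]
    rfl

lemma IsStructure.totalSize_eq [MetricSpace M] {V : Finset M} {X : Set M} {r : M}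
    {D : Multiset (Finset M × M)} (h : IsStructure V X r D) : totalSize D = V.card := by
  rw [← card_sum_agents, h.2]
  rfl

lemma SingleAgentTransition.potential_add_two_le [MetricSpace M] {V : Finset M} {X : Set M}
    {r : M} {D D' : Multiset (Finset M × M)} (h : SingleAgentTransition V X r D D') :
    potential D + 2 ≤ potential D' := by
  obtain ⟨hD, hD', C₁, C₂, p₁, p₂, v, D₀, hv, -, hle, rfl, rfl⟩ := h
  have h1 := hD.totalSize_eq
  have h2 := hD'.totalSize_eq
  have h3 := Finset.card_erase_add_one hv
  simp only [totalSize_cons, potential_cons] at *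
  have h4 : (insert v C₂).card = C₂.card + 1 := by omega
  rw [h4, ← h3]
  nlinarith

lemma MergeTransition.potential_add_two_le [MetricSpace M] {V : Finset M} {X : Set M}
    {r : M} {D D' : Multiset (Finset M × M)} (h : MergeTransition V X r D D') :
    potential D + 2 ≤ potential D' := by
  obtain ⟨hD, hD', C₁, C₂, p₁, p₂, p, D₀, hC₁, hC₂, -, rfl, rfl⟩ := h
  have h1 := hD.totalSize_eq
  have h2 := hD'.totalSize_eq
  have h3 := hC₁.card_pos
  have h4 := hC₂.card_pos
  simp only [totalSize_cons, potential_cons] at *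
  have h5 : (C₁ ∪ C₂).card = C₁.card + C₂.card := by omega
  rw [h5]
  nlinarith [Nat.mul_le_mul h3 h4]

/-- In any deliberation space with `n` agents, every sequence of
deliberative coalition structures in which each consecutive pair is a single-agent
transition or a merge transition has length at most `n²`. -/
theorem singleAgent_merge_deliberation_length_le_sq [MetricSpace M]
    (V : Finset M) (X : Set M) (r : M) (hr : r ∈ X)
    (k : ℕ) (Ds : ℕ → Multiset (Finset M × M))
    (hchain : ∀ i < k,
      SingleAgentTransition V X r (Ds i) (Ds (i + 1)) ∨
      MergeTransition V X r (Ds i) (Ds (i + 1))) :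
    k ≤ V.card ^ 2 := by
  have hstep : ∀ i < k, potential (Ds i) + 2 ≤ potential (Ds (i + 1)) := fun i hi =>
    (hchain i hi).elim (·.potential_add_two_le) (·.potential_add_two_le)
  have hgrow : ∀ i ≤ k, 2 * i ≤ potential (Ds i) := by
    intro i
    induction i with
    | zero => simp
    | succ i ih =>
      intro hi
      have := hstep i hi
      have := ih (by omega)
      omega
  -- `Ds k` is known to be a structure only if some transition ends in it.
  cases k with
  | zero => exact Nat.zero_le _
  | succ m =>
    have hs : IsStructure V X r (Ds (m + 1)) :=
      (hchain m m.lt_succ_self).elim (·.2.1) (·.2.1)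
    have h1 := hgrow (m + 1) le_rfl
    have h2 := potential_le_totalSize_sq (Ds (m + 1))
    rw [hs.totalSize_eq] at h2
    omega
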